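/- Let 𝒫 be a simple type system on Ω that is either multinuclear or atomic branching quasinuclear. Then Stab_V(𝒫) is a maximal subgroup of Thompson's group V. -/

import Mathlib

/-!
Write `swapP a b` for the involution exchanging two disjoint cones by `a ↔ b`. The argument uses
only one consequence of the hypotheses besides simplicity: every sufficiently long address `a` is
*roomy*, i.e. the type of `a` occurs at two incomparable places below `a` (`roomy_of_nucleus`,
`roomy_of_branching`). Iterating, below `a` there are addresses of the same type avoiding any
given number of sufficiently long addresses (`Roomy.avoid`).

Let `H` be a subgroup with `Stab_V(𝒫) ≤ H ≤ V`. Swaps of equivalent cones lie in the stabilizer,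
hence in `H`. Relate `α` and `β` if, for all long `γ`, all swaps between an address of the type of
`αγ` and one of the type of `βγ` lie in `H` (`SwapRel`). Since a conjugate of a swap is a swap and
`swapP x y`, `swapP y z` generate `swapP x z`, room makes this relation transitive, and it is a
quotient of `𝒫` (`swapRel_isQuotientOf`). By simplicity there are two cases.

* The relation is universal. Then `H` contains every swap, and swaps generate `V` (`mem_of_code`),
  so `H = V`.
* The relation is that of `𝒫`. For `h ∈ H` and long incomparable `α ∼ β`, conjugating the swap of
  `α`, `β` by `h` gives the swap of `α ^ h`, `β ^ h`; room upgrades this to the swaps of all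
  addresses of these types (`swapP_mem_of_equiv`), so `α ^ h ∼ β ^ h`. The comparable case follows
  through a third address, and `h⁻¹` gives the converse, so `H` is the stabilizer
  (`pres_of_swapRel_le`).

Finally the stabilizer is not `V`: if all swaps stabilized `𝒫`, moving one of two equivalent
addresses onto an arbitrary one would force `𝒫` to be universal (`universal_of_swapP_mem`).
-/

/-- Addresses: finite words over the alphabet `{0,1}` (`Bool`). -/
abbrev Addr : Type := List Bool

/-- Cantor space: infinite words over the alphabet `{0,1}`. -/
abbrev Cantor : Type := ℕ → Bool

/-- Prepend the finite word `α` to the infinite word `w`. -/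
def wcat (α : Addr) (w : Cantor) : Cantor := fun n =>
  if h : n < α.length then α.get ⟨n, h⟩ else w (n - α.length)

/-- The cone of the address `α`: the set of infinite words having `α` as a prefix. -/
def cone (α : Addr) : Set Cantor := Set.range (wcat α)

/-- `g` is a prefix substitution map: there are partitions of Cantor space into cones
`(A i)𝔠` and `(B i)𝔠` such that `g` maps `(A i) w` to `(B i) w`. -/
def IsPrefixSubst (g : Equiv.Perm Cantor) : Prop :=
  ∃ (n : ℕ) (A B : Fin n → Addr),
    (∀ i j, i ≠ j → Disjoint (cone (A i)) (cone (A j))) ∧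
    (⋃ i, cone (A i)) = Set.univ ∧
    (∀ i j, i ≠ j → Disjoint (cone (B i)) (cone (B j))) ∧
    (⋃ i, cone (B i)) = Set.univ ∧
    (∀ i w, g (wcat (A i) w) = wcat (B i) w)

/-- Thompson's group `V`, as the set of prefix substitution maps inside `Equiv.Perm Cantor`. -/
def VSet : Set (Equiv.Perm Cantor) := { g | IsPrefixSubst g }

/-- `α ^ g = β` : `g` maps the cone of `α` onto the cone of `β` by the prefix
substitution `α ↦ β`. -/
def actsOn (g : Equiv.Perm Cantor) (α β : Addr) : Prop :=
  ∀ w, g (wcat α w) = wcat β w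

/-- A subset of `Equiv.Perm Cantor` that is closed under the group operations. -/
def IsSubgroupSet (M : Set (Equiv.Perm Cantor)) : Prop :=
  (1 : Equiv.Perm Cantor) ∈ M ∧ (∀ g ∈ M, ∀ h ∈ M, g * h ∈ M) ∧ ∀ g ∈ M, g⁻¹ ∈ M

/-- `M` is a maximal subgroup of Thompson's group `V`. -/
def IsMaximalSubgroupOfV (M : Set (Equiv.Perm Cantor)) : Prop :=
  IsSubgroupSet M ∧ M ⊆ VSet ∧ M ≠ VSet ∧
    ∀ H : Set (Equiv.Perm Cantor),
      IsSubgroupSet H → M ⊆ H → H ⊆ VSet → H = M ∨ H = VSet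

/-- A relation on addresses is coherent if `α ∼ β` implies `α0 ∼ β0` and `α1 ∼ β1`. -/
def Coherent (r : Addr → Addr → Prop) : Prop :=
  ∀ α β, r α β → r (α ++ [false]) (β ++ [false]) ∧ r (α ++ [true]) (β ++ [true])

/-- A relation on addresses is reduced if `α0 ∼ β0` and `α1 ∼ β1` imply `α ∼ β`. -/
def Reduced (r : Addr → Addr → Prop) : Prop :=
  ∀ α β, r (α ++ [false]) (β ++ [false]) → r (α ++ [true]) (β ++ [true]) → r α β

/-- A type system: a coherent and reduced equivalence relation on addresses
(identified with the partition of `Ω` into its classes). -/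
def IsTypeSystem (r : Addr → Addr → Prop) : Prop :=
  Equivalence r ∧ Coherent r ∧ Reduced r

/-- `g` fixes the parts of `r`: for all but finitely many addresses `α`, the image
`α ^ g` is defined and equivalent to `α`. -/
def FixesParts (r : Addr → Addr → Prop) (g : Equiv.Perm Cantor) : Prop :=
  { α : Addr | ¬ ∃ β, actsOn g α β ∧ r α β }.Finite

/-- `g` stabilizes `r`: on some cofinite set of addresses, `α ^ g` is defined and `g`
preserves equivalence and inequivalence of addresses. -/
def Stabilizes (r : Addr → Addr → Prop) (g : Equiv.Perm Cantor) : Prop :=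
  ∃ Ω₀ : Set Addr, Ω₀ᶜ.Finite ∧ (∀ α ∈ Ω₀, ∃ β, actsOn g α β) ∧
    ∀ α ∈ Ω₀, ∀ α' ∈ Ω₀, ∀ β β', actsOn g α β → actsOn g α' β' → (r α α' ↔ r β β')

/-- `Fix_V(𝒫)`: the elements of Thompson's group `V` fixing the parts of `r`. -/
def FixSet (r : Addr → Addr → Prop) : Set (Equiv.Perm Cantor) :=
  { g | IsPrefixSubst g ∧ FixesParts r g }

/-- `Stab_V(𝒫)`: the elements of Thompson's group `V` stabilizing `r`. -/
def StabSet (r : Addr → Addr → Prop) : Set (Equiv.Perm Cantor) :=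
  { g | IsPrefixSubst g ∧ Stabilizes r g }

/-- The type system of `s` is a quotient of that of `r`. -/
def IsQuotientOf (s r : Addr → Addr → Prop) : Prop :=
  IsTypeSystem s ∧ ∀ α β, r α β → s α β

/-- A simple type system: the universal relation is a proper quotient, and every
quotient is either the type system itself or the universal one. -/
def SimpleTS (r : Addr → Addr → Prop) : Prop :=
  IsTypeSystem r ∧ (∃ α β : Addr, ¬ r α β) ∧
    ∀ s : Addr → Addr → Prop, IsQuotientOf s r →
      (∀ α β, s α β ↔ r α β) ∨ ∀ α β, s α β

/-- The type (equivalence class) of the address `α`. -/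
def typeOf (r : Addr → Addr → Prop) (α : Addr) : Set Addr := { β | r α β }

/-- `S` is a union of `r`-classes, i.e. a set of types of the type system. -/
def Saturated (r : Addr → Addr → Prop) (S : Set Addr) : Prop :=
  ∀ α ∈ S, ∀ β, r α β → β ∈ S

/-- `S` is child-closed: with each address (type) it contains both of its children. -/
def ChildClosed (S : Set Addr) : Prop :=
  ∀ α ∈ S, α ++ [false] ∈ S ∧ α ++ [true] ∈ S

/-- The word `γ` determines a path through `S` from (the type of) `α`. -/
def PathThrough (S : Set Addr) (α γ : Addr) : Prop :=
  ∀ ζ : Addr, ζ <+: γ → α ++ ζ ∈ S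

/-- `S` is strongly connected. -/
def StronglyConnected (r : Addr → Addr → Prop) (S : Set Addr) : Prop :=
  ∀ α ∈ S, ∀ β ∈ S, ∃ γ : Addr, γ ≠ [] ∧ PathThrough S α γ ∧ r (α ++ γ) β

/-- A nucleus: a (nonempty) child-closed and strongly connected set of types. -/
def IsNucleus (r : Addr → Addr → Prop) (S : Set Addr) : Prop :=
  S.Nonempty ∧ Saturated r S ∧ ChildClosed S ∧ StronglyConnected r S

/-- `S` consists of exactly one type. -/
def IsSingleType (r : Addr → Addr → Prop) (S : Set Addr) : Prop :=
  ∃ α : Addr, S = typeOf r α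

/-- A multinuclear type system: finitely many pairwise disjoint nuclei containing the
types of all sufficiently long addresses. -/
def Multinuclear (r : Addr → Addr → Prop) : Prop :=
  ∃ (k : ℕ) (Q : Fin k → Set Addr), 0 < k ∧ (∀ i, IsNucleus r (Q i)) ∧
    (∀ i j, i ≠ j → Disjoint (Q i) (Q j)) ∧
    ∃ t : ℕ, 0 < t ∧ ∀ α : Addr, t ≤ α.length → ∃ i, α ∈ Q i

/-- A nuclear type system: a single nucleus containing the types of all sufficiently
long addresses. -/
def Nuclear (r : Addr → Addr → Prop) : Prop :=
  ∃ Q : Set Addr, IsNucleus r Q ∧ ∃ t : ℕ, 0 < t ∧ ∀ α : Addr, t ≤ α.length → α ∈ Q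

/-- An atomic binuclear type system: two disjoint singleton nuclei containing the types
of all sufficiently long addresses. -/
def AtomicBinuclear (r : Addr → Addr → Prop) : Prop :=
  ∃ Q₁ Q₂ : Set Addr, IsNucleus r Q₁ ∧ IsNucleus r Q₂ ∧ Disjoint Q₁ Q₂ ∧
    IsSingleType r Q₁ ∧ IsSingleType r Q₂ ∧
    ∃ t : ℕ, 0 < t ∧ ∀ α : Addr, t ≤ α.length → α ∈ Q₁ ∪ Q₂

/-- The data `(𝒬, ℛ)` witnessing that a type system is quasinuclear. -/
def QuasinuclearData (r : Addr → Addr → Prop) (Q R : Set Addr) : Prop :=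
  Q.Nonempty ∧ R.Nonempty ∧ Saturated r Q ∧ Saturated r R ∧ Disjoint Q R ∧
    (∃ t : ℕ, 0 < t ∧ ∀ α : Addr, t ≤ α.length → α ∈ Q ∪ R) ∧
    IsNucleus r R ∧ StronglyConnected r Q ∧ ChildClosed (Q ∪ R) ∧
    ∀ α ∈ Q, ∀ β ∈ R, ∃ γ : Addr, r (α ++ γ) β

/-- A quasinuclear type system. -/
def Quasinuclear (r : Addr → Addr → Prop) : Prop :=
  ∃ Q R : Set Addr, QuasinuclearData r Q R

/-- `𝒬†`: the types of `𝒬` both of whose children lie in `𝒬`. -/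
def QDagger (Q : Set Addr) : Set Addr :=
  { α ∈ Q | α ++ [false] ∈ Q ∧ α ++ [true] ∈ Q }

/-- An atomic quasinuclear type system: the nucleus `ℛ` is a single type. -/
def AtomicQuasinuclear (r : Addr → Addr → Prop) : Prop :=
  ∃ Q R : Set Addr, QuasinuclearData r Q R ∧ IsSingleType r R

/-! ### Words and cones -/

/-- The infinite word obtained by deleting the first `n` letters. -/
def sdrop (n : ℕ) (w : Cantor) : Cantor := fun i => w (i + n)

/-- The prefix of length `n` of an infinite word. -/
def stake (n : ℕ) (w : Cantor) : Addr := List.ofFn (fun i : Fin n => w i)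

/-- Incomparability in the prefix order; equivalently, disjointness of the two cones. -/
def Inc (a b : Addr) : Prop := ¬ a <+: b ∧ ¬ b <+: a

lemma wcat_nil (w : Cantor) : wcat [] w = w := by
  funext n; simp [wcat]

lemma wcat_append (a b : Addr) (w : Cantor) : wcat (a ++ b) w = wcat a (wcat b w) := by
  funext n
  simp only [wcat, List.get_eq_getElem, List.length_append]
  by_cases h1 : n < a.length
  · have h2 : n < a.length + b.length := by omega
    simp [h1, h2, List.getElem_append_left]
  · by_cases h2 : n < a.length + b.length
    · have h3 : n - a.length < b.length := by omega
      simp [h1, h2, h3, List.getElem_append_right (not_lt.mp h1)]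
    · have h3 : ¬ n - a.length < b.length := by omega
      simp [h1, h2, h3, Nat.sub_sub]

lemma length_stake (n : ℕ) (w : Cantor) : (stake n w).length = n := by
  simp [stake]

lemma wcat_stake_sdrop (n : ℕ) (w : Cantor) : wcat (stake n w) (sdrop n w) = w := by
  funext i
  by_cases h : i < n
  · simp [wcat, stake, h]
  · simp [wcat, stake, sdrop, h, Nat.sub_add_cancel (not_lt.mp h)]

lemma sdrop_wcat (a : Addr) (w : Cantor) : sdrop a.length (wcat a w) = w := by
  funext i; simp [sdrop, wcat]

lemma wcat_inj_of_length {a b : Addr} {w w' : Cantor} (hl : a.length = b.length)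
    (h : wcat a w = wcat b w') : a = b ∧ w = w' := by
  refine ⟨List.ext_getElem hl fun n h1 h2 => ?_, ?_⟩
  · have := congrFun h n
    simpa [wcat, h1, h2] using this
  · rw [← sdrop_wcat a w, h, hl, sdrop_wcat]

lemma wcat_eq_wcat_of_le {a b : Addr} {w w' : Cantor} (hl : a.length ≤ b.length)
    (h : wcat a w = wcat b w') : ∃ c, b = a ++ c ∧ w = wcat c w' := by
  have hb : b = b.take a.length ++ b.drop a.length := (List.take_append_drop _ _).symm
  rw [hb, wcat_append] at h
  obtain ⟨h1, h2⟩ := wcat_inj_of_length (by simp [hl]) h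
  refine ⟨b.drop a.length, ?_, h2⟩
  conv_lhs => rw [hb]
  rw [← h1]

lemma Inc.symm {a b : Addr} (h : Inc a b) : Inc b a := ⟨h.2, h.1⟩

lemma Inc.ne {a b : Addr} (h : Inc a b) : a ≠ b := by
  rintro rfl; exact h.1 (List.prefix_refl _)

lemma Inc.append_left {a b : Addr} (h : Inc a b) (c : Addr) : Inc (a ++ c) b := by
  refine ⟨fun h1 => h.1 ((List.prefix_append a c).trans h1), fun h1 => ?_⟩
  rcases List.prefix_or_prefix_of_prefix h1 (List.prefix_append a c) with h2 | h2
  · exact h.2 h2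
  · exact h.1 h2

lemma Inc.append {a b : Addr} (h : Inc a b) (c d : Addr) : Inc (a ++ c) (b ++ d) :=
  ((h.append_left c).symm.append_left d).symm

lemma inc_append_iff {a u v : Addr} : Inc (a ++ u) (a ++ v) ↔ Inc u v := by
  simp [Inc, List.prefix_append_right_inj]

lemma inc_iff {a b : Addr} : Inc a b ↔ ∀ w w', wcat a w ≠ wcat b w' := by
  constructor
  · intro h w w' e
    rcases le_total a.length b.length with hl | hl
    · obtain ⟨c, hc, -⟩ := wcat_eq_wcat_of_le hl e
      exact h.1 (hc ▸ List.prefix_append a c)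
    · obtain ⟨c, hc, -⟩ := wcat_eq_wcat_of_le hl e.symm
      exact h.2 (hc ▸ List.prefix_append b c)
  · intro h
    constructor
    · rintro ⟨c, rfl⟩
      exact h (wcat c (fun _ => false)) (fun _ => false) (wcat_append _ _ _).symm
    · rintro ⟨c, rfl⟩
      exact h (fun _ => false) (wcat c (fun _ => false)) (wcat_append _ _ _)

lemma inc_of_disjoint_cone {a b : Addr} (h : Disjoint (cone a) (cone b)) : Inc a b := by
  rw [inc_iff]
  intro w w' e
  exact Set.disjoint_left.mp h ⟨w, rfl⟩ ⟨w', e.symm⟩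

lemma Inc.disjoint_cone {a b : Addr} (h : Inc a b) : Disjoint (cone a) (cone b) := by
  rw [Set.disjoint_left]
  rintro _ ⟨w, rfl⟩ ⟨w', e⟩
  exact inc_iff.mp h w w' e.symm

/-- Among words of length at least `b.length`, those comparable with `b` extend `b`. -/
lemma inc_of_not_prefix {b x : Addr} (hl : b.length ≤ x.length) (h : ¬ b <+: x) : Inc b x := by
  refine ⟨h, fun h1 => h ?_⟩
  rw [h1.eq_of_length_le hl]

/-! ### The partial action on addresses and Thompson's group -/

lemma perm_inv_apply (g : Equiv.Perm Cantor) (w : Cantor) : g⁻¹ (g w) = w := g.symm_apply_apply w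

lemma perm_apply_inv (g : Equiv.Perm Cantor) (w : Cantor) : g (g⁻¹ w) = w := g.apply_symm_apply w

lemma actsOn_append {g : Equiv.Perm Cantor} {a b : Addr} (h : actsOn g a b) (c : Addr) :
    actsOn g (a ++ c) (b ++ c) := by
  intro w; rw [wcat_append, wcat_append, h]

lemma actsOn_inv {g : Equiv.Perm Cantor} {a b : Addr} (h : actsOn g a b) : actsOn g⁻¹ b a := by
  intro w; rw [← h w, perm_inv_apply]

lemma actsOn_mul {g h : Equiv.Perm Cantor} {a b c : Addr} (h1 : actsOn h a b)
    (h2 : actsOn g b c) : actsOn (g * h) a c := by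
  intro w; rw [Equiv.Perm.mul_apply, h1, h2]

lemma actsOn_one (a : Addr) : actsOn 1 a a := fun _ => rfl

/-- No nonempty word is a prefix of every infinite word. -/
lemma eq_nil_of_surj {c : Addr} (h : ∀ w, ∃ w', w = wcat c w') : c = [] := by
  rcases c with _ | ⟨x, c⟩
  · rfl
  · obtain ⟨w', hw⟩ := h (fun _ => !x)
    have := congrFun hw 0
    simp [wcat] at this

lemma actsOn_unique {g : Equiv.Perm Cantor} {a b b' : Addr} (h : actsOn g a b)
    (h' : actsOn g a b') : b = b' := by
  wlog hl : b.length ≤ b'.length generalizing b b'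
  · exact (this h' h (by omega)).symm
  have key : ∀ w, ∃ c, b' = b ++ c ∧ w = wcat c w := fun w =>
    wcat_eq_wcat_of_le hl ((h w).symm.trans (h' w))
  obtain ⟨c, hc, -⟩ := key (fun _ => false)
  have : c = [] := eq_nil_of_surj fun w => by
    obtain ⟨c', hc', hw⟩ := key w
    rw [hc] at hc'
    rw [List.append_cancel_left hc']
    exact ⟨w, hw⟩
  simp [hc, this]

lemma actsOn_inc {g : Equiv.Perm Cantor} {a b a' b' : Addr} (ha : actsOn g a a')
    (hb : actsOn g b b') (h : Inc a b) : Inc a' b' := by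
  rw [inc_iff] at h ⊢
  intro w w' e
  rw [← ha, ← hb] at e
  exact h w w' (g.injective e)

/-- For a prefix substitution map, `α ^ g` is defined for all sufficiently long `α`. Together with
`isPrefixSubst_of_radius` this characterizes membership in `V`. -/
lemma exists_radius {g : Equiv.Perm Cantor} (hg : IsPrefixSubst g) :
    ∃ N, ∀ a : Addr, N ≤ a.length → ∃ b, actsOn g a b := by
  obtain ⟨n, A, B, -, hA, -, -, hAB⟩ := hg
  refine ⟨Finset.univ.sup fun i => (A i).length, fun a ha => ?_⟩
  have : wcat a (fun _ => false) ∈ ⋃ i, cone (A i) := by rw [hA]; trivial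
  obtain ⟨i, w, hw⟩ := Set.mem_iUnion.mp this
  have hle : (A i).length ≤ a.length :=
    (Finset.le_sup (f := fun i => (A i).length) (Finset.mem_univ i)).trans ha
  obtain ⟨c, hc, -⟩ := wcat_eq_wcat_of_le hle hw
  exact ⟨B i ++ c, hc ▸ actsOn_append (hAB i) c⟩

lemma isPrefixSubst_of_radius {g : Equiv.Perm Cantor} {N : ℕ}
    (h : ∀ a : Addr, N = a.length → ∃ b, actsOn g a b) : IsPrefixSubst g := by
  let e := Fintype.equivFin (Fin N → Bool)
  have hlen : ∀ i, N = (List.ofFn (e.symm i)).length := by simp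
  choose B hB using fun i => h (List.ofFn (e.symm i)) (hlen i)
  have hdisj : ∀ i j, i ≠ j → Inc (List.ofFn (e.symm i)) (List.ofFn (e.symm j)) := by
    intro i j hij
    refine inc_of_not_prefix (by simp) fun hp => hij ?_
    have := hp.eq_of_length (by simp)
    exact e.symm.injective (List.ofFn_injective this)
  have hcov : ∀ w : Cantor, ∃ i w', w = wcat (List.ofFn (e.symm i)) w' := fun w =>
    ⟨e fun i => w i, sdrop N w, by
      conv_lhs => rw [← wcat_stake_sdrop N w]
      simp [stake]⟩
  refine ⟨_, fun i => List.ofFn (e.symm i), B, fun i j hij => (hdisj i j hij).disjoint_cone, ?_,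
    fun i j hij => (actsOn_inc (hB i) (hB j) (hdisj i j hij)).disjoint_cone, ?_, hB⟩
  · refine Set.eq_univ_of_forall fun w => Set.mem_iUnion.mpr ?_
    obtain ⟨i, w', hw⟩ := hcov w
    exact ⟨i, w', hw.symm⟩
  · refine Set.eq_univ_of_forall fun w => Set.mem_iUnion.mpr ?_
    obtain ⟨i, w', hw⟩ := hcov (g⁻¹ w)
    refine ⟨i, w', ?_⟩
    rw [← hB i w', ← hw, perm_apply_inv]

/-- The action shortens addresses by a bounded amount. -/
lemma length_actsOn {g : Equiv.Perm Cantor} {N : ℕ}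
    (h : ∀ a : Addr, N ≤ a.length → ∃ b, actsOn g a b) {a b : Addr} (hab : actsOn g a b) :
    a.length ≤ b.length + N := by
  rcases le_total a.length N with hl | hl
  · omega
  · obtain ⟨b', hb'⟩ := h (a.take N) (by simp [hl])
    have h2 := actsOn_append hb' (a.drop N)
    rw [List.take_append_drop] at h2
    rw [actsOn_unique hab h2]
    simp; omega

lemma isPrefixSubst_one : IsPrefixSubst 1 :=
  isPrefixSubst_of_radius (N := 0) fun a _ => ⟨a, actsOn_one a⟩

lemma IsPrefixSubst.inv {g : Equiv.Perm Cantor} (hg : IsPrefixSubst g) : IsPrefixSubst g⁻¹ := by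
  obtain ⟨n, A, B, h1, h2, h3, h4, h5⟩ := hg
  exact ⟨n, B, A, h3, h4, h1, h2, fun i => actsOn_inv (h5 i)⟩

lemma IsPrefixSubst.mul {g h : Equiv.Perm Cantor} (hg : IsPrefixSubst g) (hh : IsPrefixSubst h) :
    IsPrefixSubst (g * h) := by
  obtain ⟨N, hN⟩ := exists_radius hg
  obtain ⟨K, hK⟩ := exists_radius hh
  refine isPrefixSubst_of_radius (N := N + K) fun a ha => ?_
  obtain ⟨b, hb⟩ := hK a (by omega)
  have := length_actsOn hK hb
  obtain ⟨c, hc⟩ := hN b (by omega)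
  exact ⟨c, actsOn_mul hb hc⟩

/-! ### Swaps of two incomparable cones -/

open Classical in
/-- The underlying function of `swapP`. -/
noncomputable def swapFun (a b : Addr) (w : Cantor) : Cantor :=
  if w ∈ cone a then wcat b (sdrop a.length w)
  else if w ∈ cone b then wcat a (sdrop b.length w) else w

lemma wcat_notMem_cone {a b : Addr} (h : Inc a b) (w : Cantor) : wcat a w ∉ cone b :=
  fun ⟨_, e⟩ => inc_iff.mp h _ _ e.symm

lemma swapFun_left (a b : Addr) (w : Cantor) : swapFun a b (wcat a w) = wcat b w := by
  simp [swapFun, cone, sdrop_wcat]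

lemma swapFun_right {a b : Addr} (h : Inc a b) (w : Cantor) :
    swapFun a b (wcat b w) = wcat a w := by
  have h2 : wcat b w ∈ cone b := ⟨w, rfl⟩
  simp [swapFun, wcat_notMem_cone h.symm, h2, sdrop_wcat]

lemma swapFun_other {a b : Addr} {w : Cantor} (ha : w ∉ cone a) (hb : w ∉ cone b) :
    swapFun a b w = w := by
  simp [swapFun, ha, hb]

lemma swapFun_involutive {a b : Addr} (h : Inc a b) : Function.Involutive (swapFun a b) := by
  intro w
  by_cases ha : w ∈ cone a
  · obtain ⟨w, rfl⟩ := ha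
    rw [swapFun_left, swapFun_right h]
  · by_cases hb : w ∈ cone b
    · obtain ⟨w, rfl⟩ := hb
      rw [swapFun_right h, swapFun_left]
    · rw [swapFun_other ha hb, swapFun_other ha hb]

open Classical in
/-- For incomparable `a`, `b`, the involution exchanging the cones of `a` and `b` by the prefix
substitutions `a ↔ b` and fixing all other points; the identity if `a`, `b` are comparable. -/
noncomputable def swapP (a b : Addr) : Equiv.Perm Cantor :=
  if h : Inc a b then (swapFun_involutive h).toPerm else 1

lemma swapP_apply {a b : Addr} (h : Inc a b) (w : Cantor) : swapP a b w = swapFun a b w := by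
  simp [swapP, h]

lemma swapP_of_not_inc {a b : Addr} (h : ¬ Inc a b) : swapP a b = 1 := by
  simp [swapP, h]

lemma swapP_left {a b : Addr} (h : Inc a b) : actsOn (swapP a b) a b := fun w => by
  rw [swapP_apply h, swapFun_left]

lemma swapP_right {a b : Addr} (h : Inc a b) : actsOn (swapP a b) b a := fun w => by
  rw [swapP_apply h, swapFun_right h]

lemma swapP_other {a b c : Addr} (h1 : Inc c a) (h2 : Inc c b) :
    actsOn (swapP a b) c c := fun w => by
  by_cases h : Inc a b
  · rw [swapP_apply h, swapFun_other (wcat_notMem_cone h1 w) (wcat_notMem_cone h2 w)]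
  · rw [swapP_of_not_inc h]; rfl

lemma swapP_other_point {a b : Addr} (h : Inc a b) {w : Cantor} (ha : w ∉ cone a)
    (hb : w ∉ cone b) : swapP a b w = w := by
  rw [swapP_apply h, swapFun_other ha hb]

lemma eq_swapP {g : Equiv.Perm Cantor} {a b : Addr} (h : Inc a b) (h1 : actsOn g a b)
    (h2 : actsOn g b a) (h3 : ∀ w, w ∉ cone a → w ∉ cone b → g w = w) : g = swapP a b := by
  ext1 w
  by_cases ha : w ∈ cone a
  · obtain ⟨w, rfl⟩ := ha
    rw [h1, swapP_left h]
  · by_cases hb : w ∈ cone b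
    · obtain ⟨w, rfl⟩ := hb
      rw [h2, swapP_right h]
    · rw [h3 w ha hb, swapP_other_point h ha hb]

lemma swapP_comm (a b : Addr) : swapP a b = swapP b a := by
  by_cases h : Inc a b
  · exact eq_swapP h.symm (swapP_right h) (swapP_left h) fun w h1 h2 => swapP_other_point h h2 h1
  · rw [swapP_of_not_inc h, swapP_of_not_inc fun h' => h h'.symm]

/-- Conjugation carries swaps to swaps. -/
lemma conj_swapP {g : Equiv.Perm Cantor} {a b a' b' : Addr} (h : Inc a b) (ha : actsOn g a a')
    (hb : actsOn g b b') : g * swapP a b * g⁻¹ = swapP a' b' := by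
  refine eq_swapP (actsOn_inc ha hb h) ?_ ?_ ?_
  · exact actsOn_mul (actsOn_inv ha) (actsOn_mul (swapP_left h) hb)
  · exact actsOn_mul (actsOn_inv hb) (actsOn_mul (swapP_right h) ha)
  · intro w h1 h2
    have h1' : g⁻¹ w ∉ cone a := by
      rintro ⟨v, hv⟩
      exact h1 ⟨v, by rw [← ha v, hv, perm_apply_inv]⟩
    have h2' : g⁻¹ w ∉ cone b := by
      rintro ⟨v, hv⟩
      exact h2 ⟨v, by rw [← hb v, hv, perm_apply_inv]⟩
    rw [Equiv.Perm.mul_apply, Equiv.Perm.mul_apply, swapP_other_point h h1' h2',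
      perm_apply_inv]

lemma inc_children (a : Addr) : Inc (a ++ [false]) (a ++ [true]) := by
  rw [inc_append_iff]; simp [Inc]

lemma mem_cone_child {a : Addr} {w : Cantor} (h : w ∈ cone a) :
    w ∈ cone (a ++ [false]) ∨ w ∈ cone (a ++ [true]) := by
  obtain ⟨v, rfl⟩ := h
  have hv := wcat_stake_sdrop 1 v
  have : stake 1 v = [v 0] := by simp [stake]
  rw [this] at hv
  rcases h0 : v 0 with _ | _
  · left; exact ⟨sdrop 1 v, by rw [wcat_append, ← h0, hv]⟩
  · right; exact ⟨sdrop 1 v, by rw [wcat_append, ← h0, hv]⟩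

lemma cone_append_subset (a c : Addr) : cone (a ++ c) ⊆ cone a := by
  rintro _ ⟨w, rfl⟩; exact ⟨wcat c w, (wcat_append _ _ _).symm⟩

lemma actsOn_of_children {g : Equiv.Perm Cantor} {a b : Addr}
    (h0 : actsOn g (a ++ [false]) (b ++ [false])) (h1 : actsOn g (a ++ [true]) (b ++ [true])) :
    actsOn g a b := by
  intro w
  have hw := wcat_stake_sdrop 1 w
  have hs : stake 1 w = [w 0] := by simp [stake]
  rw [hs] at hw
  rw [← hw, ← wcat_append, ← wcat_append]
  rcases w 0 with _ | _
  · exact h0 _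
  · exact h1 _

lemma swapP_eq_mul {a b : Addr} (h : Inc a b) :
    swapP a b = swapP (a ++ [false]) (b ++ [false]) * swapP (a ++ [true]) (b ++ [true]) := by
  have ab : ∀ c d, Inc (a ++ c) (b ++ d) := h.append
  symm
  apply eq_swapP h
  · apply actsOn_of_children
    · exact actsOn_mul (swapP_other (inc_children a) (ab _ _)) (swapP_left (ab _ _))
    · exact actsOn_mul (swapP_left (ab _ _)) (swapP_other (ab _ _).symm (inc_children b).symm)
  · apply actsOn_of_children
    · exact actsOn_mul (swapP_other (ab _ _).symm (inc_children b)) (swapP_right (ab _ _))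
    · exact actsOn_mul (swapP_right (ab _ _)) (swapP_other (inc_children a).symm (ab _ _))
  · intro w ha hb
    have ha' : ∀ c, w ∉ cone (a ++ c) := fun c hc => ha (cone_append_subset _ _ hc)
    have hb' : ∀ c, w ∉ cone (b ++ c) := fun c hc => hb (cone_append_subset _ _ hc)
    rw [Equiv.Perm.mul_apply, swapP_other_point (ab _ _) (ha' _) (hb' _),
      swapP_other_point (ab _ _) (ha' _) (hb' _)]

/-- Every sufficiently long address either extends one of `a`, `b`, or is fixed by the swap. -/
lemma swapP_cases {a b : Addr} (h : Inc a b) {x : Addr} (ha : a.length ≤ x.length)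
    (hb : b.length ≤ x.length) :
    (∃ c, x = a ++ c ∧ actsOn (swapP a b) x (b ++ c)) ∨
    (∃ c, x = b ++ c ∧ actsOn (swapP a b) x (a ++ c)) ∨ actsOn (swapP a b) x x := by
  by_cases h1 : a <+: x
  · obtain ⟨c, rfl⟩ := h1
    exact .inl ⟨c, rfl, actsOn_append (swapP_left h) c⟩
  by_cases h2 : b <+: x
  · obtain ⟨c, rfl⟩ := h2
    exact .inr (.inl ⟨c, rfl, actsOn_append (swapP_right h) c⟩)
  exact .inr (.inr (swapP_other (inc_of_not_prefix ha h1).symm (inc_of_not_prefix hb h2).symm))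

lemma isPrefixSubst_swapP (a b : Addr) : IsPrefixSubst (swapP a b) := by
  by_cases h : Inc a b
  · refine isPrefixSubst_of_radius (N := a.length + b.length) fun x hx => ?_
    rcases swapP_cases h (x := x) (by omega) (by omega) with ⟨c, -, hc⟩ | ⟨c, -, hc⟩ | hc
    exacts [⟨_, hc⟩, ⟨_, hc⟩, ⟨_, hc⟩]
  · rw [swapP_of_not_inc h]; exact isPrefixSubst_one

/-- Two swaps with a common cone generate the third one. -/
lemma swapP_mem_trans {H : Set (Equiv.Perm Cantor)} (hH : IsSubgroupSet H) {x y z : Addr}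
    (xy : Inc x y) (yz : Inc y z) (xz : Inc x z) (h1 : swapP x y ∈ H) (h2 : swapP y z ∈ H) :
    swapP x z ∈ H := by
  rw [← conj_swapP yz (swapP_right xy) (swapP_other xz.symm yz.symm)]
  exact hH.2.1 _ (hH.2.1 _ h1 _ h2) _ (hH.2.2 _ h1)

/-- A swap is a product of swaps of the descendants at any fixed depth. -/
lemma swapP_mem_of_depth {H : Set (Equiv.Perm Cantor)} (hH : IsSubgroupSet H) (m : ℕ) :
    ∀ {a b : Addr}, (∀ c : Addr, c.length = m → swapP (a ++ c) (b ++ c) ∈ H) → swapP a b ∈ H := by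
  induction m with
  | zero => intro a b h; simpa using h [] rfl
  | succ m ih =>
    intro a b h
    by_cases hab : Inc a b
    · rw [swapP_eq_mul hab]
      refine hH.2.1 _ (ih fun c hc => ?_) _ (ih fun c hc => ?_)
      · simpa using h (false :: c) (by simp [hc])
      · simpa using h (true :: c) (by simp [hc])
    · rw [swapP_of_not_inc hab]; exact hH.1

/-! ### Generation of `V` by swaps -/

/-- A complete prefix code: finitely many addresses whose cones partition Cantor space. -/
def IsCode (S : Finset Addr) : Prop :=
  (∀ x ∈ S, ∀ y ∈ S, x ≠ y → Inc x y) ∧ ∀ w, ∃ x ∈ S, w ∈ cone x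

/-- A complete prefix code other than `{[]}` contains two siblings: a longest element together
with its sibling. -/
lemma IsCode.exists_siblings {S : Finset Addr} (hS : IsCode S) (hnil : [] ∉ S) :
    ∃ u : Addr, u ++ [false] ∈ S ∧ u ++ [true] ∈ S := by
  obtain ⟨x0, hx0, -⟩ := hS.2 (fun _ => false)
  obtain ⟨x, hx, hmax⟩ := S.exists_max_image List.length ⟨x0, hx0⟩
  have hne : x ≠ [] := fun h => hnil (h ▸ hx)
  obtain ⟨u, e, rfl⟩ : ∃ u e, x = u ++ [e] :=
    ⟨x.dropLast, x.getLast hne, (List.dropLast_append_getLast hne).symm⟩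
  have hsib : u ++ [!e] ∈ S := by
    obtain ⟨y, hy, w, hw⟩ := hS.2 (wcat (u ++ [!e]) fun _ => false)
    have hle : y.length ≤ (u ++ [!e]).length := by simpa using hmax y hy
    obtain ⟨c, hc, -⟩ := wcat_eq_wcat_of_le hle hw
    rcases List.eq_nil_or_concat c with rfl | ⟨d, f, rfl⟩
    · rw [List.append_nil] at hc
      rwa [hc]
    · -- otherwise `y` is a prefix of `u`, hence comparable with the longest element
      exfalso
      have hu : u = y ++ d := by
        rw [List.concat_eq_append, ← List.append_assoc] at hc
        exact (List.append_inj' hc rfl).1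
      have hne : y ≠ u ++ [e] := by
        intro h
        have := congrArg List.length h
        rw [hu] at this
        simp at this
      refine (hS.1 y hy _ hx hne).1 ?_
      rw [hu, List.append_assoc]
      exact List.prefix_append _ _
  rcases e with _ | _
  · exact ⟨u, hx, hsib⟩
  · exact ⟨u, hsib, hx⟩

lemma swapP_actsOn_code {S : Finset Addr} (hS : IsCode S) {x y z : Addr} (hx : x ∈ S)
    (hy : y ∈ S) (hz : z ∈ S) : actsOn (swapP x y) z (Equiv.swap x y z) := by
  by_cases hxy : x = y
  · subst hxy
    rw [swapP_of_not_inc fun h => h.ne rfl, Equiv.swap_self]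
    exact actsOn_one z
  have hi := hS.1 x hx y hy hxy
  by_cases h1 : z = x
  · subst h1; rw [Equiv.swap_apply_left]; exact swapP_left hi
  by_cases h2 : z = y
  · subst h2; rw [Equiv.swap_apply_right]; exact swapP_right hi
  rw [Equiv.swap_apply_of_ne_of_ne h1 h2]
  exact swapP_other (hS.1 z hz x hx h1) (hS.1 z hz y hy h2)

lemma swap_mem_code {S : Finset Addr} {x y z : Addr} (hx : x ∈ S)
    (hy : y ∈ S) (hz : z ∈ S) : Equiv.swap x y z ∈ S := by
  by_cases h1 : z = x
  · subst h1; rwa [Equiv.swap_apply_left]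
  by_cases h2 : z = y
  · subst h2; rwa [Equiv.swap_apply_right]
  rwa [Equiv.swap_apply_of_ne_of_ne h1 h2]

lemma eq_nil_of_actsOn_nil {g : Equiv.Perm Cantor} {b : Addr} (h : actsOn g [] b) : b = [] :=
  eq_nil_of_surj fun w => ⟨g⁻¹ w, by rw [← h, wcat_nil, perm_apply_inv]⟩

lemma IsCode.merge {S : Finset Addr} (hS : IsCode S) {u : Addr} (h0 : u ++ [false] ∈ S)
    (h1 : u ++ [true] ∈ S) :
    IsCode (insert u ((S.erase (u ++ [false])).erase (u ++ [true]))) := by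
  have key : ∀ y ∈ (S.erase (u ++ [false])).erase (u ++ [true]), Inc u y := by
    intro y hy
    rw [Finset.mem_erase, Finset.mem_erase] at hy
    have i0 := hS.1 _ h0 y hy.2.2 hy.2.1.symm
    have i1 := hS.1 _ h1 y hy.2.2 hy.1.symm
    rw [inc_iff] at i0 i1 ⊢
    intro w w' e
    rcases mem_cone_child (a := u) (w := wcat u w) ⟨w, rfl⟩ with ⟨v, hv⟩ | ⟨v, hv⟩
    · exact i0 v w' (hv.trans e)
    · exact i1 v w' (hv.trans e)
  refine ⟨fun x hx y hy hxy => ?_, fun w => ?_⟩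
  · rcases Finset.mem_insert.mp hx with rfl | hx'
    · rcases Finset.mem_insert.mp hy with rfl | hy'
      · exact absurd rfl hxy
      · exact key y hy'
    · rcases Finset.mem_insert.mp hy with rfl | hy'
      · exact (key x hx').symm
      · exact hS.1 x (Finset.mem_of_mem_erase (Finset.mem_of_mem_erase hx')) y
          (Finset.mem_of_mem_erase (Finset.mem_of_mem_erase hy')) hxy
  · obtain ⟨x, hx, hw⟩ := hS.2 w
    by_cases e0 : x = u ++ [false]
    · exact ⟨u, Finset.mem_insert_self _ _, cone_append_subset _ _ (e0 ▸ hw)⟩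
    by_cases e1 : x = u ++ [true]
    · exact ⟨u, Finset.mem_insert_self _ _, cone_append_subset _ _ (e1 ▸ hw)⟩
    exact ⟨x, Finset.mem_insert_of_mem (Finset.mem_erase.mpr ⟨e1, Finset.mem_erase.mpr ⟨e0, hx⟩⟩),
      hw⟩

/-- An element with a table on a code of `n` leaves is a product of swaps. Induction on `n`:
composing with two swaps of image leaves carries a sibling pair to a sibling pair, and both
carets can then be merged. -/
lemma mem_of_code {H : Set (Equiv.Perm Cantor)} (hH : IsSubgroupSet H)
    (hsw : ∀ a b, Inc a b → swapP a b ∈ H) (n : ℕ) :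
    ∀ (g : Equiv.Perm Cantor) (S : Finset Addr), S.card = n → IsCode S →
      (∀ x ∈ S, ∃ y, actsOn g x y) → g ∈ H := by
  have hsw' : ∀ a b, swapP a b ∈ H := fun a b => by
    by_cases h : Inc a b
    · exact hsw a b h
    · rw [swapP_of_not_inc h]; exact hH.1
  induction n with
  | zero =>
    intro g S hc hS _
    obtain ⟨x, hx, -⟩ := hS.2 (fun _ => false)
    rw [Finset.card_eq_zero.mp hc] at hx
    exact absurd hx (Finset.notMem_empty x)
  | succ n ih =>
    intro g S hc hS hg
    by_cases hnil : [] ∈ S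
    · obtain ⟨b, hb⟩ := hg [] hnil
      obtain rfl := eq_nil_of_actsOn_nil hb
      have : g = 1 := by
        ext1 w
        simpa [wcat_nil] using hb w
      rw [this]; exact hH.1
    · choose! f hf using hg
      have hT : IsCode (S.image f) := by
        refine ⟨fun x hx y hy hxy => ?_, fun w => ?_⟩
        · obtain ⟨p, hp, rfl⟩ := Finset.mem_image.mp hx
          obtain ⟨q, hq, rfl⟩ := Finset.mem_image.mp hy
          exact actsOn_inc (hf p hp) (hf q hq) (hS.1 p hp q hq fun h => hxy (h ▸ rfl))
        · obtain ⟨x, hx, v, hv⟩ := hS.2 (g⁻¹ w)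
          exact ⟨f x, Finset.mem_image_of_mem f hx, v, by rw [← hf x hx, hv, perm_apply_inv]⟩
      have hnilT : [] ∉ S.image f := by
        intro h
        obtain ⟨p, hp, hpe⟩ := Finset.mem_image.mp h
        have h1 := actsOn_inv (hf p hp)
        rw [hpe] at h1
        exact hnil (eq_nil_of_actsOn_nil h1 ▸ hp)
      obtain ⟨u, hu0, hu1⟩ := hS.exists_siblings hnil
      obtain ⟨v, hv0, hv1⟩ := hT.exists_siblings hnilT
      have hfT : ∀ x ∈ S, f x ∈ S.image f := fun x hx => Finset.mem_image_of_mem f hx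
      have hfne : f (u ++ [false]) ≠ f (u ++ [true]) :=
        (actsOn_inc (hf _ hu0) (hf _ hu1) (inc_children u)).ne
      set s1 := Equiv.swap (f (u ++ [false])) (v ++ [false]) with hs1
      set y := s1 (f (u ++ [true])) with hy
      have hyT : y ∈ S.image f := swap_mem_code (hfT _ hu0) hv0 (hfT _ hu1)
      have hyne : v ++ [false] ≠ y := by
        intro h
        apply hfne
        apply s1.injective
        rw [← hy, ← h, hs1, Equiv.swap_apply_left]
      set g2 := swapP y (v ++ [true]) * (swapP (f (u ++ [false])) (v ++ [false]) * g) with hg2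
      have hact : ∀ x ∈ S, actsOn g2 x (Equiv.swap y (v ++ [true]) (s1 (f x))) := fun x hx =>
        actsOn_mul (actsOn_mul (hf x hx) (swapP_actsOn_code hT (hfT _ hu0) hv0 (hfT x hx)))
          (swapP_actsOn_code hT hyT hv1 (swap_mem_code (hfT _ hu0) hv0 (hfT x hx)))
      have ha0 : actsOn g2 (u ++ [false]) (v ++ [false]) := by
        have := hact _ hu0
        rwa [hs1, Equiv.swap_apply_left,
          Equiv.swap_apply_of_ne_of_ne hyne (inc_children v).ne] at this
      have ha1 : actsOn g2 (u ++ [true]) (v ++ [true]) := by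
        have := hact _ hu1
        rwa [← hy, Equiv.swap_apply_left] at this
      have hu : u ∉ (S.erase (u ++ [false])).erase (u ++ [true]) := fun h =>
        (hS.1 u (Finset.mem_of_mem_erase (Finset.mem_of_mem_erase h)) _ hu0 (by simp)).1
          (List.prefix_append _ _)
      have hg2H : g2 ∈ H := by
        refine ih g2 (insert u ((S.erase (u ++ [false])).erase (u ++ [true]))) ?_
          (hS.merge hu0 hu1) ?_
        · rw [Finset.card_insert_of_notMem hu, Finset.card_erase_of_mem
            (Finset.mem_erase.mpr ⟨(inc_children u).ne.symm, hu1⟩), Finset.card_erase_of_mem hu0]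
          have : 1 < S.card := Finset.one_lt_card.mpr ⟨_, hu0, _, hu1, (inc_children u).ne⟩
          omega
        · intro x hx
          rcases Finset.mem_insert.mp hx with rfl | hx'
          · exact ⟨v, actsOn_of_children ha0 ha1⟩
          · exact ⟨_, hact x (Finset.mem_of_mem_erase (Finset.mem_of_mem_erase hx'))⟩
      have : g = (swapP (f (u ++ [false])) (v ++ [false]))⁻¹ *
          ((swapP y (v ++ [true]))⁻¹ * g2) := by
        rw [hg2]; group
      rw [this]
      exact hH.2.1 _ (hH.2.2 _ (hsw' _ _)) _ (hH.2.1 _ (hH.2.2 _ (hsw' _ _)) _ hg2H)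

lemma mem_of_isPrefixSubst {H : Set (Equiv.Perm Cantor)} (hH : IsSubgroupSet H)
    (hsw : ∀ a b, Inc a b → swapP a b ∈ H) {g : Equiv.Perm Cantor} (hg : IsPrefixSubst g) :
    g ∈ H := by
  obtain ⟨n, A, B, hdisj, hcov, -, -, hAB⟩ := hg
  refine mem_of_code hH hsw _ g (Finset.univ.image A) rfl ⟨?_, ?_⟩ ?_
  · intro x hx y hy hxy
    obtain ⟨i, -, rfl⟩ := Finset.mem_image.mp hx
    obtain ⟨j, -, rfl⟩ := Finset.mem_image.mp hy
    exact inc_of_disjoint_cone (hdisj i j fun h => hxy (h ▸ rfl))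
  · intro w
    have : w ∈ ⋃ i, cone (A i) := by rw [hcov]; trivial
    obtain ⟨i, hi⟩ := Set.mem_iUnion.mp this
    exact ⟨A i, Finset.mem_image_of_mem A (Finset.mem_univ i), hi⟩
  · intro x hx
    obtain ⟨i, -, rfl⟩ := Finset.mem_image.mp hx
    exact ⟨B i, hAB i⟩

/-! ### Stabilizers of type systems -/

/-- The one-sided form of stabilizing: `g` preserves equivalence of long addresses. -/
def Pres (r : Addr → Addr → Prop) (g : Equiv.Perm Cantor) : Prop :=
  ∃ N, ∀ a b a' b' : Addr, N ≤ a.length → N ≤ b.length → actsOn g a a' → actsOn g b b' →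
    r a b → r a' b'

lemma exists_length_bound {S : Set Addr} (hS : Sᶜ.Finite) :
    ∃ N, ∀ a : Addr, N ≤ a.length → a ∈ S := by
  refine ⟨hS.toFinset.sup List.length + 1, fun a ha => ?_⟩
  by_contra h
  have := Finset.le_sup (f := List.length) (hS.mem_toFinset.mpr h)
  omega

lemma finite_length_lt (N : ℕ) : {a : Addr | N ≤ a.length}ᶜ.Finite := by
  refine (List.finite_length_lt Bool N).subset fun a ha => ?_
  simpa using ha

lemma mem_stabSet_iff {r : Addr → Addr → Prop} {g : Equiv.Perm Cantor} :
    g ∈ StabSet r ↔ IsPrefixSubst g ∧ Pres r g ∧ Pres r g⁻¹ := by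
  constructor
  · rintro ⟨hg, S, hS, -, hst⟩
    obtain ⟨N, hN⟩ := exists_length_bound hS
    obtain ⟨K, hK⟩ := exists_radius hg.inv
    refine ⟨hg, ⟨N, fun a b a' b' ha hb h1 h2 hab =>
      (hst a (hN a ha) b (hN b hb) a' b' h1 h2).mp hab⟩,
      ⟨N + K, fun a b a' b' ha hb h1 h2 hab => ?_⟩⟩
    have l1 := length_actsOn hK h1
    have l2 := length_actsOn hK h2
    have h1' := actsOn_inv h1
    have h2' := actsOn_inv h2
    rw [inv_inv] at h1' h2'
    exact (hst a' (hN a' (by omega)) b' (hN b' (by omega)) a b h1' h2').mpr hab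
  · rintro ⟨hg, ⟨N, hN⟩, ⟨K, hK⟩⟩
    obtain ⟨L, hL⟩ := exists_radius hg
    refine ⟨hg, {a | N + K + L ≤ a.length}, finite_length_lt _, fun a ha => hL a ?_,
      fun a ha b hb a' b' h1 h2 => ⟨hN a b a' b' ?_ ?_ h1 h2,
        hK a' b' a b ?_ ?_ (actsOn_inv h1) (actsOn_inv h2)⟩⟩
    · have : N + K + L ≤ a.length := ha
      omega
    · have : N + K + L ≤ a.length := ha
      omega
    · have : N + K + L ≤ b.length := hb
      omega
    · have h3 : N + K + L ≤ a.length := ha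
      have := length_actsOn hL h1
      omega
    · have h3 : N + K + L ≤ b.length := hb
      have := length_actsOn hL h2
      omega

lemma Pres.mul {r : Addr → Addr → Prop} {g h : Equiv.Perm Cantor} (hh : IsPrefixSubst h)
    (h1 : Pres r g) (h2 : Pres r h) : Pres r (g * h) := by
  obtain ⟨N, hN⟩ := h1
  obtain ⟨K, hK⟩ := h2
  obtain ⟨L, hL⟩ := exists_radius hh
  refine ⟨N + K + L, fun a b a' b' ha hb haa hbb hab => ?_⟩
  obtain ⟨c, hc⟩ := hL a (by omega)
  obtain ⟨d, hd⟩ := hL b (by omega)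
  have l1 := length_actsOn hL hc
  have l2 := length_actsOn hL hd
  refine hN c d a' b' (by omega) (by omega) ?_ ?_ (hK a b c d (by omega) (by omega) hc hd hab)
  · have := actsOn_mul (actsOn_inv hc) haa
    rwa [mul_inv_cancel_right] at this
  · have := actsOn_mul (actsOn_inv hd) hbb
    rwa [mul_inv_cancel_right] at this

lemma isSubgroupSet_stabSet (r : Addr → Addr → Prop) : IsSubgroupSet (StabSet r) := by
  have h1 : Pres r 1 := ⟨0, fun a b a' b' _ _ ha hb hab => by
    rwa [← actsOn_unique (actsOn_one a) ha, ← actsOn_unique (actsOn_one b) hb]⟩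
  refine ⟨?_, fun g hg h hh => ?_, fun g hg => ?_⟩
  · rw [mem_stabSet_iff, inv_one]
    exact ⟨isPrefixSubst_one, h1, h1⟩
  · rw [mem_stabSet_iff] at hg hh ⊢
    rw [mul_inv_rev]
    exact ⟨hg.1.mul hh.1, hg.2.1.mul hh.1 hh.2.1, hh.2.2.mul hg.1.inv hg.2.2⟩
  · rw [mem_stabSet_iff] at hg ⊢
    rw [inv_inv]
    exact ⟨hg.1.inv, hg.2.2, hg.2.1⟩

lemma Coherent.append {r : Addr → Addr → Prop} (hr : Coherent r) {a b : Addr} (h : r a b)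
    (c : Addr) : r (a ++ c) (b ++ c) := by
  induction c generalizing a b with
  | nil => simpa using h
  | cons x c ih =>
    have : r (a ++ [x]) (b ++ [x]) := by
      cases x
      exacts [(hr a b h).1, (hr a b h).2]
    simpa using ih this

lemma Reduced.of_depth {r : Addr → Addr → Prop} (hr : Reduced r) (m : ℕ) :
    ∀ {a b : Addr}, (∀ c : Addr, c.length = m → r (a ++ c) (b ++ c)) → r a b := by
  induction m with
  | zero => intro a b h; simpa using h [] rfl
  | succ m ih =>
    intro a b h
    refine hr a b (ih fun c hc => ?_) (ih fun c hc => ?_)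
    · simpa using h (false :: c) (by simp [hc])
    · simpa using h (true :: c) (by simp [hc])

/-- A swap of equivalent cones moves every long address to an equivalent one. -/
lemma swapP_mem_stabSet {r : Addr → Addr → Prop} (hr : IsTypeSystem r) {a b : Addr}
    (hab : r a b) : swapP a b ∈ StabSet r := by
  by_cases hi : Inc a b
  · have hp : Pres r (swapP a b) := by
      have key : ∀ x x' : Addr, a.length + b.length ≤ x.length → actsOn (swapP a b) x x' →
          r x x' := by
        intro x x' hx hxx
        rcases swapP_cases hi (x := x) (by omega) (by omega) with ⟨c, h, hc⟩ | ⟨c, h, hc⟩ | hc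
        · rw [actsOn_unique hxx hc, h]
          exact hr.2.1.append hab c
        · rw [actsOn_unique hxx hc, h]
          exact hr.2.1.append (hr.1.symm hab) c
        · rw [actsOn_unique hxx hc]
          exact hr.1.refl _
      exact ⟨a.length + b.length, fun x y x' y' hx hy hxx hyy h =>
        hr.1.trans (hr.1.trans (hr.1.symm (key x x' hx hxx)) h) (key y y' hy hyy)⟩
    have hinv : (swapP a b)⁻¹ = swapP a b := by
      rw [inv_eq_iff_mul_eq_one]
      ext1 w
      simp only [Equiv.Perm.mul_apply, swapP_apply hi, Equiv.Perm.one_apply]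
      exact swapFun_involutive hi w
    rw [mem_stabSet_iff, hinv]
    exact ⟨isPrefixSubst_swapP a b, hp, hp⟩
  · rw [swapP_of_not_inc hi]
    exact (isSubgroupSet_stabSet r).1

/-! ### Room: addresses that contain disjoint copies of themselves -/

/-- The type of `a` recurs at two incomparable places below `a`. -/
def Roomy (r : Addr → Addr → Prop) (a : Addr) : Prop :=
  ∃ u v : Addr, Inc u v ∧ r (a ++ u) a ∧ r (a ++ v) a

lemma Roomy.congr {r : Addr → Addr → Prop} (hr : IsTypeSystem r) {a b : Addr} (h : Roomy r a)
    (hab : r a b) : Roomy r b := by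
  obtain ⟨u, v, hi, hu, hv⟩ := h
  have hba := hr.1.symm hab
  exact ⟨u, v, hi, hr.1.trans (hr.2.1.append hba u) (hr.1.trans hu hab),
    hr.1.trans (hr.2.1.append hba v) (hr.1.trans hv hab)⟩

/-- Below a roomy address `b` there is an address of the same type avoiding any `k` sufficiently
long addresses. -/
lemma Roomy.avoid {r : Addr → Addr → Prop} (hr : IsTypeSystem r) (k : ℕ) :
    ∀ {b : Addr}, Roomy r b → ∃ m : ℕ, ∀ F : Finset Addr, F.card ≤ k →
      (∀ x ∈ F, m ≤ x.length) → ∃ w, r (b ++ w) b ∧ ∀ x ∈ F, Inc (b ++ w) x := by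
  induction k with
  | zero =>
    intro b _
    refine ⟨0, fun F hF _ => ⟨[], by simpa using hr.1.refl b, fun x hx => ?_⟩⟩
    rw [Finset.card_eq_zero.mp (Nat.le_zero.mp hF)] at hx
    exact absurd hx (Finset.notMem_empty x)
  | succ k ih =>
    intro b hb
    obtain ⟨u, v, hi, hu, hv⟩ := id hb
    obtain ⟨m1, h1⟩ := ih (hb.congr hr (hr.1.symm hu))
    obtain ⟨m2, h2⟩ := ih (hb.congr hr (hr.1.symm hv))
    refine ⟨m1 + m2 + (b ++ u).length + (b ++ v).length, fun F hF hlen => ?_⟩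
    rcases F.eq_empty_or_nonempty with rfl | ⟨x, hx⟩
    · exact ⟨[], by simpa using hr.1.refl b, by simp⟩
    have hxl := hlen x hx
    have hcard : (F.erase x).card ≤ k := by
      rw [Finset.card_erase_of_mem hx]; omega
    have step : ∀ s m, r (b ++ s) b → Inc (b ++ s) x →
        m ≤ m1 + m2 + (b ++ u).length + (b ++ v).length →
        (∀ F : Finset Addr, F.card ≤ k → (∀ x ∈ F, m ≤ x.length) →
          ∃ w, r (b ++ s ++ w) (b ++ s) ∧ ∀ x ∈ F, Inc (b ++ s ++ w) x) →
        ∃ w, r (b ++ w) b ∧ ∀ x ∈ F, Inc (b ++ w) x := by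
      intro s m hs hsx hm hF
      obtain ⟨w, hw, hwi⟩ := hF (F.erase x) hcard fun y hy =>
        hm.trans (hlen y (Finset.mem_of_mem_erase hy))
      refine ⟨s ++ w, ?_, fun y hy => ?_⟩
      · rw [← List.append_assoc]
        exact hr.1.trans hw hs
      · rw [← List.append_assoc]
        by_cases e : y = x
        · rw [e]; exact hsx.append_left w
        · exact hwi y (Finset.mem_erase.mpr ⟨e, hy⟩)
    by_cases hp : (b ++ u) <+: x
    · -- a word cannot extend both of two incomparable words
      have hq : ¬ (b ++ v) <+: x := by
        intro hq
        have hi' := inc_append_iff (a := b).mpr hi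
        rcases List.prefix_or_prefix_of_prefix hp hq with h | h
        exacts [hi'.1 h, hi'.2 h]
      exact step v m2 hv (inc_of_not_prefix (by omega) hq) (by omega) h2
    · exact step u m1 hu (inc_of_not_prefix (by omega) hp) (by omega) h1

/-! ### The quotient attached to an overgroup -/

/-- The relation of an overgroup `H` of the stabilizer: `α` and `β` are related if for all long
`γ` every swap of an address of the type of `αγ` with one of the type of `βγ` lies in `H`. -/
def SwapRel (r : Addr → Addr → Prop) (H : Set (Equiv.Perm Cantor)) (α β : Addr) : Prop :=
  ∃ n : ℕ, ∀ γ : Addr, n ≤ γ.length → ∀ x y, r (α ++ γ) x → r (β ++ γ) y → swapP x y ∈ H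

/-- Transitivity: after refining two incomparable addresses there is room for a third one of the
intermediate type, and the swaps compose. -/
lemma swapRel_trans {r : Addr → Addr → Prop} (hr : IsTypeSystem r) {n₀ : ℕ}
    (hroom : ∀ a : Addr, n₀ ≤ a.length → Roomy r a) {H : Set (Equiv.Perm Cantor)}
    (hH : IsSubgroupSet H) {α β δ : Addr} (h1 : SwapRel r H α β)
    (h2 : SwapRel r H β δ) : SwapRel r H α δ := by
  obtain ⟨n1, h1⟩ := h1
  obtain ⟨n2, h2⟩ := h2
  refine ⟨n1 + n2 + n₀, fun γ hγ x z hx hz => ?_⟩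
  by_cases hxz : Inc x z
  swap
  · rw [swapP_of_not_inc hxz]; exact hH.1
  obtain ⟨m, hm⟩ := (hroom (β ++ γ) (by simp; omega)).avoid hr 2
  refine swapP_mem_of_depth hH m fun η hη => ?_
  obtain ⟨w, hw, hwi⟩ := hm {x ++ η, z ++ η} Finset.card_le_two (by simp; omega)
  have ix : Inc (β ++ γ ++ w ++ η) (x ++ η) := (hwi _ (by simp)).append_left η
  have iz : Inc (β ++ γ ++ w ++ η) (z ++ η) := (hwi _ (by simp)).append_left η
  have hy : r (β ++ (γ ++ η)) (β ++ γ ++ w ++ η) := by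
    rw [← List.append_assoc]
    exact hr.2.1.append (hr.1.symm hw) η
  refine swapP_mem_trans hH ix.symm iz (hxz.append η η) ?_ ?_
  · refine h1 (γ ++ η) (by simp; omega) _ _ ?_ hy
    rw [← List.append_assoc]
    exact hr.2.1.append hx η
  · refine h2 (γ ++ η) (by simp; omega) _ _ hy ?_
    rw [← List.append_assoc]
    exact hr.2.1.append hz η

lemma swapRel_isQuotientOf {r : Addr → Addr → Prop} (hr : IsTypeSystem r) {n₀ : ℕ}
    (hroom : ∀ a : Addr, n₀ ≤ a.length → Roomy r a) {H : Set (Equiv.Perm Cantor)}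
    (hH : IsSubgroupSet H) (hle : StabSet r ⊆ H) :
    IsQuotientOf (SwapRel r H) r := by
  have hsub : ∀ α β, r α β → SwapRel r H α β := fun α β h => ⟨0, fun γ _ x y hx hy =>
    hle (swapP_mem_stabSet hr
      (hr.1.trans (hr.1.symm hx) (hr.1.trans (hr.2.1.append h γ) hy)))⟩
  refine ⟨⟨⟨fun α => hsub α α (hr.1.refl α), ?_, fun h1 h2 =>
    swapRel_trans hr hroom hH h1 h2⟩, ?_, ?_⟩, hsub⟩
  · rintro α β ⟨n, h⟩
    exact ⟨n, fun γ hγ x y hx hy => swapP_comm y x ▸ h γ hγ y x hy hx⟩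
  · rintro α β ⟨n, h⟩
    constructor
    all_goals
      refine ⟨n, fun γ hγ x y hx hy => ?_⟩
      rw [List.append_assoc] at hx hy
      exact h _ (by simp; omega) x y hx hy
  · rintro α β ⟨n1, h1⟩ ⟨n2, h2⟩
    refine ⟨n1 + n2 + 1, fun γ hγ x y hx hy => ?_⟩
    rcases γ with _ | ⟨e, γ⟩
    · simp at hγ
    rw [List.length_cons] at hγ
    cases e
    · exact h1 γ (by omega) x y (by simpa using hx) (by simpa using hy)
    · exact h2 γ (by omega) x y (by simpa using hx) (by simpa using hy)

/-- Swaps of one incomparable pair of roomy addresses (and of its descendants) give the swaps of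
every pair of the same types: both pairs are connected through a third one, lying below `a` and
`b` and disjoint from refinements of all four addresses. -/
lemma swapP_mem_of_equiv {r : Addr → Addr → Prop} (hr : IsTypeSystem r) {n₀ : ℕ}
    (hroom : ∀ a : Addr, n₀ ≤ a.length → Roomy r a) {H : Set (Equiv.Perm Cantor)}
    (hH : IsSubgroupSet H) (hle : StabSet r ⊆ H)
    {a b a' b' : Addr} (ha : n₀ ≤ a.length) (hb : n₀ ≤ b.length)
    (hab : Inc a b) (hsw : ∀ c, swapP (a ++ c) (b ++ c) ∈ H) (haa : r a a') (hbb : r b b') :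
    swapP a' b' ∈ H := by
  by_cases hab' : Inc a' b'
  swap
  · rw [swapP_of_not_inc hab']; exact hH.1
  obtain ⟨m1, h1⟩ := (hroom a ha).avoid hr 4
  obtain ⟨m2, h2⟩ := (hroom b hb).avoid hr 4
  refine swapP_mem_of_depth hH (m1 + m2) fun η hη => ?_
  set F : Finset Addr := {a ++ η, b ++ η, a' ++ η, b' ++ η} with hF
  have hcard : F.card ≤ 4 := Finset.card_le_four
  have hlen : ∀ x ∈ F, m1 + m2 ≤ x.length := by
    simp [hF]; omega
  obtain ⟨v, hv, hvi⟩ := h1 F hcard fun x hx => (Nat.le_add_right _ _).trans (hlen x hx)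
  obtain ⟨w, hw, hwi⟩ := h2 F hcard fun x hx => (Nat.le_add_left _ _).trans (hlen x hx)
  have iv : ∀ x ∈ F, Inc (a ++ v ++ η) x := fun x hx => (hvi x hx).append_left η
  have iw : ∀ x ∈ F, Inc (b ++ w ++ η) x := fun x hx => (hwi x hx).append_left η
  have ivw : Inc (a ++ v ++ η) (b ++ w ++ η) := (hab.append v w).append η η
  have m_a : a ++ η ∈ F := by simp [hF]
  have m_b : b ++ η ∈ F := by simp [hF]
  have m_a' : a' ++ η ∈ F := by simp [hF]
  have m_b' : b' ++ η ∈ F := by simp [hF]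
  have mem : ∀ {x y : Addr}, r x y → swapP x y ∈ H := fun h => hle (swapP_mem_stabSet hr h)
  have e1 : swapP (a ++ v ++ η) (b ++ η) ∈ H :=
    swapP_mem_trans hH (iv _ m_a) (hab.append η η) (iv _ m_b) (mem (hr.2.1.append hv η)) (hsw η)
  have e2 : swapP (a ++ v ++ η) (b ++ w ++ η) ∈ H :=
    swapP_mem_trans hH (iv _ m_b) (iw _ m_b).symm ivw e1 (mem (hr.2.1.append (hr.1.symm hw) η))
  have e3 : swapP (a' ++ η) (b ++ w ++ η) ∈ H :=
    swapP_mem_trans hH (iv _ m_a').symm ivw (iw _ m_a').symm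
      (mem (hr.2.1.append (hr.1.symm (hr.1.trans hv haa)) η)) e2
  exact swapP_mem_trans hH (iw _ m_a').symm (iw _ m_b') (hab'.append η η) e3
    (mem (hr.2.1.append (hr.1.trans hw hbb) η))

/-- If the attached quotient is `r` itself, elements of `H` preserve the equivalence of long
addresses. -/
lemma pres_of_swapRel_le {r : Addr → Addr → Prop} (hr : IsTypeSystem r) {n₀ : ℕ}
    (hroom : ∀ a : Addr, n₀ ≤ a.length → Roomy r a) {H : Set (Equiv.Perm Cantor)}
    (hH : IsSubgroupSet H) (hle : StabSet r ⊆ H)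
    (hs : ∀ α β, SwapRel r H α β → r α β) {h : Equiv.Perm Cantor}
    (hh : h ∈ H) (hV : IsPrefixSubst h) : Pres r h := by
  obtain ⟨L, hL⟩ := exists_radius hV
  have key : ∀ α β a b : Addr, L + n₀ ≤ α.length → L + n₀ ≤ β.length → actsOn h α a →
      actsOn h β b → r α β → Inc α β → r a b := by
    intro α β a b hα hβ ha hb hαβ hi
    have la := length_actsOn hL ha
    have lb := length_actsOn hL hb
    have hsw : ∀ c, swapP (a ++ c) (b ++ c) ∈ H := fun c => by
      rw [← conj_swapP (hi.append c c) (actsOn_append ha c) (actsOn_append hb c)]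
      exact hH.2.1 _ (hH.2.1 _ hh _ (hle (swapP_mem_stabSet hr (hr.2.1.append hαβ c)))) _
        (hH.2.2 _ hh)
    refine hs a b ⟨0, fun γ _ x y hx hy => ?_⟩
    refine swapP_mem_of_equiv hr hroom hH hle (a := a ++ γ) (b := b ++ γ) (by simp; omega)
      (by simp; omega) ((actsOn_inc ha hb hi).append γ γ) (fun c => ?_) hx hy
    rw [List.append_assoc, List.append_assoc]
    exact hsw _
  -- comparable addresses are compared through a third address disjoint from their refinements
  refine ⟨L + n₀, fun α β a b hα hβ ha hb hαβ => ?_⟩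
  obtain ⟨m, hm⟩ := (hroom α (by omega)).avoid hr 2
  refine hr.2.2.of_depth m fun η hη => ?_
  obtain ⟨w, hw, hwi⟩ := hm {α ++ η, β ++ η} Finset.card_le_two (by simp; omega)
  obtain ⟨d, hd⟩ := hL (α ++ w) (by simp; omega)
  have hd' := actsOn_append hd η
  have hwη := hr.2.1.append hw η
  have e1 : r (d ++ η) (a ++ η) :=
    key (α ++ w ++ η) (α ++ η) _ _ (by simp; omega) (by simp; omega) hd' (actsOn_append ha η)
      hwη ((hwi _ (by simp)).append_left η)
  have e2 : r (d ++ η) (b ++ η) :=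
    key (α ++ w ++ η) (β ++ η) _ _ (by simp; omega) (by simp; omega) hd' (actsOn_append hb η)
      (hr.1.trans hwη (hr.2.1.append hαβ η)) ((hwi _ (by simp)).append_left η)
  exact hr.1.trans (hr.1.symm e1) e2

/-- If every swap stabilizes `r`, then moving one of two equivalent addresses by a swap shows that
`r` is universal. -/
lemma universal_of_swapP_mem {r : Addr → Addr → Prop} (hr : IsTypeSystem r) {n₀ : ℕ}
    (hroom : ∀ a : Addr, n₀ ≤ a.length → Roomy r a)
    (hall : ∀ a b, Inc a b → swapP a b ∈ StabSet r) (α β : Addr) : r α β := by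
  have h1 : ∀ y b : Addr, n₀ ≤ b.length → Inc y b → r y b := by
    intro y b hb hi
    obtain ⟨m, hm⟩ := (hroom b hb).avoid hr 2
    refine hr.2.2.of_depth m fun η hη => ?_
    obtain ⟨w, hw, hwi⟩ := hm {b ++ η, y ++ η} Finset.card_le_two (by simp; omega)
    have ib : Inc (b ++ w ++ η) (b ++ η) := (hwi _ (by simp)).append_left η
    have iy : Inc (b ++ w ++ η) (y ++ η) := (hwi _ (by simp)).append_left η
    obtain ⟨N, hN⟩ := (mem_stabSet_iff.mp (hall _ _ iy)).2.1
    refine hr.2.2.of_depth N fun c hc => ?_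
    exact hN (b ++ w ++ η ++ c) (b ++ η ++ c) _ _ (by simp; omega) (by simp; omega)
      (actsOn_append (swapP_left iy) c)
      (actsOn_append (swapP_other ib.symm (hi.append η η).symm) c)
      (hr.2.1.append (hr.2.1.append hw η) c)
  have h2 : ∀ y b : Addr, n₀ + 1 ≤ y.length → n₀ + 1 ≤ b.length → r y b := by
    intro y b hy hb
    by_cases hi : Inc y b
    · exact h1 y b (by omega) hi
    · rcases y with _ | ⟨e, y⟩
      · simp at hy
      rcases b with _ | ⟨f, b⟩
      · simp at hb
      rw [List.length_cons] at hy hb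
      have hef : e = f := by
        by_contra hne
        exact hi ⟨fun h => hne (List.cons_prefix_cons.mp h).1,
          fun h => hne (List.cons_prefix_cons.mp h).1.symm⟩
      subst hef
      have hz : ∀ c : Addr, Inc (e :: c) ((!e) :: y) := fun c =>
        ⟨fun h => by simpa using (List.cons_prefix_cons.mp h).1,
          fun h => by simpa using (List.cons_prefix_cons.mp h).1⟩
      exact hr.1.trans (h1 _ _ (by simp; omega) (hz y))
        (hr.1.symm (h1 _ _ (by simp; omega) (hz b)))
  exact hr.2.2.of_depth (n₀ + 1) fun c hc => h2 _ _ (by simp; omega) (by simp; omega)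

theorem stabSet_isMaximal_of_roomy {r : Addr → Addr → Prop} (hr : SimpleTS r) {n₀ : ℕ}
    (hroom : ∀ a : Addr, n₀ ≤ a.length → Roomy r a) : IsMaximalSubgroupOfV (StabSet r) := by
  obtain ⟨hts, ⟨α, β, hαβ⟩, hsimple⟩ := hr
  refine ⟨isSubgroupSet_stabSet r, fun g hg => hg.1, fun heq => hαβ ?_, fun H hH hle hHV => ?_⟩
  · refine universal_of_swapP_mem hts hroom (fun a b _ => ?_) α β
    rw [heq]
    exact isPrefixSubst_swapP a b
  · rcases hsimple _ (swapRel_isQuotientOf hts hroom hH hle) with hs | hs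
    · left
      refine Set.Subset.antisymm (fun h hh => mem_stabSet_iff.mpr ⟨hHV hh, ?_, ?_⟩) hle
      · exact pres_of_swapRel_le hts hroom hH hle (fun a b => (hs a b).mp) hh (hHV hh)
      · exact pres_of_swapRel_le hts hroom hH hle (fun a b => (hs a b).mp) (hH.2.2 h hh)
          (IsPrefixSubst.inv (hHV hh))
    · right
      refine Set.Subset.antisymm hHV fun g hg => mem_of_isPrefixSubst hH (fun a b _ => ?_) hg
      obtain ⟨n, hn⟩ := hs a b
      exact swapP_mem_of_depth hH n fun c hc => hn c hc.ge _ _ (hts.1.refl _) (hts.1.refl _)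

/-! ### Room in nuclei and in the branching part -/

lemma roomy_of_nucleus {r : Addr → Addr → Prop} {S : Set Addr} (hS : IsNucleus r S) {a : Addr}
    (ha : a ∈ S) : Roomy r a := by
  obtain ⟨-, -, hcc, hsc⟩ := hS
  obtain ⟨c, -, -, hc⟩ := hsc _ (hcc a ha).1 a ha
  obtain ⟨d, -, -, hd⟩ := hsc _ (hcc a ha).2 a ha
  refine ⟨[false] ++ c, [true] ++ d, Inc.append (by simp [Inc]) c d, ?_, ?_⟩
  · rwa [← List.append_assoc]
  · rwa [← List.append_assoc]

lemma roomy_of_branching {r : Addr → Addr → Prop} (hr : IsTypeSystem r) {Q : Set Addr}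
    (hsc : StronglyConnected r Q) (hbr : (QDagger Q).Nonempty) {a : Addr} (ha : a ∈ Q) :
    Roomy r a := by
  obtain ⟨q, hq, hq0, hq1⟩ := hbr
  obtain ⟨c, -, -, hc⟩ := hsc a ha q hq
  obtain ⟨d, -, -, hd⟩ := hsc _ hq0 a ha
  obtain ⟨e, -, -, he⟩ := hsc _ hq1 a ha
  refine ⟨c ++ [false] ++ d, c ++ [true] ++ e, (inc_children c).append d e, ?_, ?_⟩
  · have := hr.2.1.append (hr.2.1.append hc [false]) d
    simp only [← List.append_assoc] at this ⊢
    exact hr.1.trans this hd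
  · have := hr.2.1.append (hr.2.1.append hc [true]) e
    simp only [← List.append_assoc] at this ⊢
    exact hr.1.trans this he

/-- If a simple type system is multinuclear or atomic branching
quasinuclear, then `Stab_V(𝒫)` is a maximal subgroup of Thompson's group `V`. -/
theorem stabSet_isMaximal_of_multinuclear_or_atomicBranchingQuasinuclear
    (r : Addr → Addr → Prop) (hr : SimpleTS r)
    (h : Multinuclear r ∨
      ∃ Q R : Set Addr, QuasinuclearData r Q R ∧ IsSingleType r R ∧
        (QDagger Q).Nonempty) :
    IsMaximalSubgroupOfV (StabSet r) := by
  rcases h with ⟨k, Q, -, hQ, -, t, -, ht⟩ | ⟨Q, R, hQR, -, hbr⟩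
  · refine stabSet_isMaximal_of_roomy hr (n₀ := t) fun a ha => ?_
    obtain ⟨i, hi⟩ := ht a ha
    exact roomy_of_nucleus (hQ i) hi
  · obtain ⟨-, -, -, -, -, ⟨t, -, ht⟩, hR, hsc, -, -⟩ := hQR
    refine stabSet_isMaximal_of_roomy hr (n₀ := t) fun a ha => ?_
    rcases ht a ha with h | h
    · exact roomy_of_branching hr.1 hsc hbr h
    · exact roomy_of_nucleus hR h
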